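/- arXiv:2505.01672 — 14 statements merged into one kernel-verified Lean document; each statement's English description precedes it below -/
import Mathlib

section
/- Let (X,d) be a complete metric space and T : X → X a mapping such that (i) for every ε > 0 there exists δ > 0 such that for all x, y ∈ X, (1/2)(d(x,Tx) + d(y,Ty)) < ε + δ implies d(Tx,Ty) ≤ ε, and (ii) for all x, y ∈ X, x ≠ y implies d(Tx,Ty) < (1/2)(d(x,Tx) + d(y,Ty)). Then T has a unique fixed point. -/
/-- Kannan-type CJM fixed point theorem (Theorem 2.1). -/
theorem kannan_cjm_fixed_point {X : Type*} [MetricSpace X] [CompleteSpace X] [Nonempty X]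
    (T : X → X)
    (h1 : ∀ ε > (0 : ℝ), ∃ δ > (0 : ℝ), ∀ x y : X,
      (dist x (T x) + dist y (T y)) / 2 < ε + δ → dist (T x) (T y) ≤ ε)
    (h2 : ∀ x y : X, x ≠ y → dist (T x) (T y) < (dist x (T x) + dist y (T y)) / 2) :
    ∃! z : X, T z = z := by
  have hw : ∀ x y : X, dist (T x) (T y) ≤ (dist x (T x) + dist y (T y)) / 2 := by
    intro x y
    by_cases hxy : x = y
    · subst hxy
      rw [dist_self]
      positivity
    · exact (h2 x y hxy).le
  obtain ⟨x0⟩ := ‹Nonempty X›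
  let x : ℕ → X := fun n => T^[n] x0
  have hx : ∀ n, x (n + 1) = T (x n) := fun n => Function.iterate_succ_apply' T n x0
  let s : ℕ → ℝ := fun n => dist (x n) (T (x n))
  have hs : ∀ n, s n = dist (x n) (T (x n)) := fun n => rfl
  have hs' : ∀ n, s (n + 1) = dist (T (x n)) (T (T (x n))) := fun n => by rw [hs, hx]
  have hs0 : ∀ n, 0 ≤ s n := fun n => dist_nonneg
  have hanti : Antitone s := by
    refine antitone_nat_of_succ_le fun n => ?_
    have := hw (x n) (T (x n))
    rw [← hs', ← hs] at this
    linarith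
  have hbdd : BddBelow (Set.range s) := ⟨0, by rintro _ ⟨n, rfl⟩; exact hs0 n⟩
  have hlim := tendsto_atTop_ciInf hanti hbdd
  have hle : ∀ n, (⨅ n, s n) ≤ s n := fun n => ciInf_le hbdd n
  have hl0 : 0 ≤ ⨅ n, s n := le_ciInf hs0
  generalize (⨅ n, s n) = l at hlim hle hl0
  have hl : l = 0 := by
    by_contra hne
    have hpos : 0 < l := lt_of_le_of_ne hl0 (Ne.symm hne)
    obtain ⟨δ, hδ, H⟩ := h1 l hpos
    obtain ⟨n, hn⟩ := (hlim.eventually (gt_mem_nhds (show l < l + δ by linarith))).exists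
    have a1 : s (n + 1) ≤ l := by
      have := H (x n) (T (x n))
      rw [← hs', ← hs] at this
      apply this
      have := hanti (Nat.le_succ n)
      simp only [Nat.succ_eq_add_one] at this
      linarith
    have a2 := hle (n + 1 + 1)
    have hne' : x (n + 1) ≠ T (x (n + 1)) := by
      rw [← dist_pos, ← hs]
      linarith [hle (n + 1)]
    have a3 := h2 _ _ hne'
    rw [← hs', ← hs] at a3
    linarith
  subst hl
  have hc : CauchySeq (fun n => x (n + 1)) := by
    refine cauchySeq_of_le_tendsto_0 s (fun n m N hn hm => ?_) hlim
    have := hw (x n) (x m)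
    rw [← hs, ← hs] at this
    simp only [hx]
    linarith [hanti hn, hanti hm]
  obtain ⟨z, hz⟩ := cauchySeq_tendsto_of_complete hc
  refine ⟨z, ?_, ?_⟩
  · have b1 : dist z (T z) ≤ (0 + dist z (T z)) / 2 := by
      refine le_of_tendsto_of_tendsto' (hz.dist tendsto_const_nhds)
        ((hlim.add_const (dist z (T z))).div_const 2) fun n => ?_
      rw [hx]
      exact hw (x n) z
    have b2 : dist z (T z) = 0 := le_antisymm (by linarith) dist_nonneg
    exact (dist_eq_zero.mp b2).symm
  · intro y hy
    have hTz : T z = z := by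
      have b1 : dist z (T z) ≤ (0 + dist z (T z)) / 2 := by
        refine le_of_tendsto_of_tendsto' (hz.dist tendsto_const_nhds)
          ((hlim.add_const (dist z (T z))).div_const 2) fun n => ?_
        rw [hx]
        exact hw (x n) z
      have b2 : dist z (T z) = 0 := le_antisymm (by linarith) dist_nonneg
      exact (dist_eq_zero.mp b2).symm
    have := hw y z
    have hy' : T y = y := hy
    rw [hy', hTz, dist_self, dist_self] at this
    exact dist_le_zero.mp (by linarith)
end

section
/- Let (X,d) be a complete metric space and T : X → X a mapping satisfying condition (CM). If for every x ∈ X and every ε > 0 there exists δ > 0 such that for all i, j ∈ ℕ ∪ {0}, (1/2)(d(T^i x, T^{i+1} x) + d(T^j x, T^{j+1} x)) < ε + δ implies d(T^{i+1} x, T^{j+1} x) ≤ ε, then T has a unique fixed point z ∈ X and the Picard sequence (T^n x) converges to z for every x ∈ X. -/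
/-- Theorem 3.1, (i) ⇒ (ii): the weakest Kannan-type condition on Picard sequences
implies existence of a unique fixed point and convergence of all Picard sequences. -/
theorem kannan_weakest_forward {X : Type*} [MetricSpace X] [CompleteSpace X] [Nonempty X]
    (T : X → X)
    (hCM : ∀ x y : X, x ≠ y → dist (T x) (T y) < (dist x (T x) + dist y (T y)) / 2)
    (h : ∀ x : X, ∀ ε > (0 : ℝ), ∃ δ > (0 : ℝ), ∀ i j : ℕ,
      (dist (T^[i] x) (T^[i+1] x) + dist (T^[j] x) (T^[j+1] x)) / 2 < ε + δ →
        dist (T^[i+1] x) (T^[j+1] x) ≤ ε) :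
    ∃ z : X, T z = z ∧ (∀ w : X, T w = w → w = z) ∧
      ∀ x : X, Filter.Tendsto (fun n => T^[n] x) Filter.atTop (nhds z) := by
  have hle : ∀ x y : X, dist (T x) (T y) ≤ (dist x (T x) + dist y (T y)) / 2 := by
    intro x y
    by_cases hxy : x = y
    · subst hxy
      rw [dist_self]
      positivity
    · exact (hCM x y hxy).le
  have uniq : ∀ z w : X, T z = z → T w = w → w = z := by
    intro z w hz hw
    by_contra hne
    have h1 := hCM w z hne
    rw [hz, hw, dist_self, dist_self] at h1
    have h2 : 0 ≤ dist w z := dist_nonneg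
    linarith
  have key : ∀ x : X, ∃ z : X, T z = z ∧
      Filter.Tendsto (fun n => T^[n] x) Filter.atTop (nhds z) := by
    intro x
    set d : ℕ → ℝ := fun n => dist (T^[n] x) (T^[n+1] x) with hd
    have hd0 : ∀ n, 0 ≤ d n := fun n => dist_nonneg
    have hanti : Antitone d := by
      apply antitone_nat_of_succ_le
      intro n
      have h1 := hle (T^[n] x) (T^[n+1] x)
      simp only [← Function.iterate_succ_apply' T] at h1
      change d (n+1) ≤ (d n + d (n+1)) / 2 at h1
      linarith
    have hbdd : BddBelow (Set.range d) := ⟨0, by rintro _ ⟨n, rfl⟩; exact hd0 n⟩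
    have hlim := tendsto_atTop_ciInf hanti hbdd
    have hr : ∀ n, iInf d ≤ d n := fun n => ciInf_le hbdd n
    have hr0 : iInf d = 0 := by
      by_contra hne
      have hpos : 0 < iInf d := lt_of_le_of_ne (le_ciInf hd0) (Ne.symm hne)
      obtain ⟨δ, hδ, H⟩ := h x _ hpos
      obtain ⟨n, hn⟩ := (hlim.eventually (gt_mem_nhds (lt_add_of_pos_right (iInf d) hδ))).exists
      have h1 := H n (n+1) (by
        change (d n + d (n+1)) / 2 < _
        have := hanti (Nat.le_succ n)
        simp only [Nat.succ_eq_add_one] at this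
        linarith)
      change d (n+1) ≤ _ at h1
      have h2 := hCM (T^[n+1] x) (T^[n+1+1] x) (by
        apply dist_pos.mp
        exact lt_of_lt_of_le hpos (hr (n+1)))
      simp only [← Function.iterate_succ_apply' T] at h2
      change d (n+2) < (d (n+1) + d (n+2)) / 2 at h2
      have := hr (n+2)
      linarith
    rw [hr0] at hlim
    have hC : CauchySeq (fun n => T^[n] x) := by
      rw [Metric.cauchySeq_iff']
      intro ε hε
      obtain ⟨δ, hδ, H⟩ := h x (ε/2) (by linarith)
      obtain ⟨N, hN⟩ := (hlim.eventually (gt_mem_nhds (show (0:ℝ) < ε/2 by linarith))).exists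
      refine ⟨N+1, fun n hn => ?_⟩
      obtain ⟨m, rfl⟩ : ∃ m, n = m + 1 := ⟨n-1, by omega⟩
      have := H m N (by
        change (d m + d N) / 2 < _
        have := hanti (show N ≤ m by omega)
        linarith)
      exact lt_of_le_of_lt this (by linarith)
    obtain ⟨z, hz⟩ := cauchySeq_tendsto_of_complete hC
    refine ⟨z, ?_, hz⟩
    have hz1 := (hz.comp (Filter.tendsto_add_atTop_nat 1)).dist
      (tendsto_const_nhds (x := T z))
    have hz2 := (hlim.add_const (dist z (T z))).div_const 2
    have h3 := le_of_tendsto_of_tendsto' hz1 hz2 (by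
      intro n
      have h1 := hle (T^[n] x) z
      simp only [← Function.iterate_succ_apply' T] at h1
      exact h1)
    have h4 : 0 ≤ dist z (T z) := dist_nonneg
    exact (dist_eq_zero.mp (by linarith)).symm
  obtain ⟨x0⟩ := ‹Nonempty X›
  obtain ⟨z, hz, -⟩ := key x0
  refine ⟨z, hz, fun w hw => uniq z w hz hw, fun x => ?_⟩
  obtain ⟨w, hw, hl⟩ := key x
  rwa [uniq z w hz hw] at hl
end

section
/- Let (X,d) be a complete metric space and T : X → X a mapping satisfying condition (CM). If T has a unique fixed point z ∈ X and the Picard sequence (T^n x) converges to z for every x ∈ X, then for every x ∈ X and every ε > 0 there exists δ > 0 such that for all i, j ∈ ℕ ∪ {0}, (1/2)(d(T^i x, T^{i+1} x) + d(T^j x, T^{j+1} x)) < ε + δ implies d(T^{i+1} x, T^{j+1} x) ≤ ε. -/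
/-- Theorem 3.1, (ii) ⇒ (i): if a (CM) mapping has a unique fixed point to which all
Picard sequences converge, then the weakest Kannan-type ε-δ condition holds. -/
theorem kannan_weakest_backward {X : Type*} [MetricSpace X] [CompleteSpace X] [Nonempty X]
    (T : X → X)
    (hCM : ∀ x y : X, x ≠ y → dist (T x) (T y) < (dist x (T x) + dist y (T y)) / 2)
    (z : X) (hz : T z = z) (huniq : ∀ w : X, T w = w → w = z)
    (hconv : ∀ x : X, Filter.Tendsto (fun n => T^[n] x) Filter.atTop (nhds z)) :
    ∀ x : X, ∀ ε > (0 : ℝ), ∃ δ > (0 : ℝ), ∀ i j : ℕ,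
      (dist (T^[i] x) (T^[i+1] x) + dist (T^[j] x) (T^[j+1] x)) / 2 < ε + δ →
        dist (T^[i+1] x) (T^[j+1] x) ≤ ε := by
  intro x ε hε
  have hsmall : ∀ c : ℝ, 0 < c → ∀ᶠ δ in nhdsWithin (0:ℝ) (Set.Ioi 0), δ < c := by
    intro c hc
    exact Filter.Eventually.filter_mono nhdsWithin_le_nhds (eventually_lt_nhds hc)
  have hlim : ∀ c : ℝ, 0 < c → ∃ N : ℕ, ∀ n ≥ N, dist (T^[n] x) z < c :=
    fun c hc => Metric.tendsto_atTop.1 (hconv x) c hc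
  have hpair : ∀ i j : ℕ, ∀ᶠ δ in nhdsWithin (0:ℝ) (Set.Ioi 0),
      (dist (T^[i] x) (T^[i+1] x) + dist (T^[j] x) (T^[j+1] x)) / 2 < ε + δ →
        dist (T^[i+1] x) (T^[j+1] x) ≤ ε := by
    intro i j
    by_cases h : (dist (T^[i] x) (T^[i+1] x) + dist (T^[j] x) (T^[j+1] x)) / 2 ≤ ε
    · refine Filter.Eventually.of_forall fun δ _ => ?_
      simp only [Function.iterate_succ_apply'] at h ⊢
      by_cases e : T^[i] x = T^[j] x
      · rw [e, dist_self]; exact hε.le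
      · exact ((hCM _ _ e).le).trans h
    · filter_upwards [hsmall _ (sub_pos.2 (not_le.1 h))] with δ hδ h'
      linarith
  have hrow : ∀ i : ℕ, ∀ᶠ δ in nhdsWithin (0:ℝ) (Set.Ioi 0), ∀ j : ℕ,
      (dist (T^[i] x) (T^[i+1] x) + dist (T^[j] x) (T^[j+1] x)) / 2 < ε + δ →
        dist (T^[i+1] x) (T^[j+1] x) ≤ ε := by
    intro i
    by_cases h : dist (T^[i] x) (T^[i+1] x) / 2 ≤ ε
    · have hd : dist (T^[i+1] x) z < ε := by
        simp only [Function.iterate_succ_apply'] at h ⊢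
        by_cases e : T^[i] x = z
        · rw [e, hz, dist_self]; exact hε
        · have := hCM _ _ e
          rw [hz, dist_self, add_zero] at this
          linarith
      obtain ⟨N, hN⟩ := hlim _ (sub_pos.2 hd)
      filter_upwards [(Filter.eventually_all_finite (Set.finite_lt_nat N)).2
        fun j _ => hpair i j] with δ hδ j hj
      by_cases hjN : j < N
      · exact hδ j hjN hj
      · have h1 := hN (j+1) (by omega)
        have h2 := dist_triangle_right (T^[i+1] x) (T^[j+1] x) z
        linarith
    · filter_upwards [hsmall _ (sub_pos.2 (not_le.1 h))] with δ hδ j h'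
      have := dist_nonneg (x := T^[j] x) (y := T^[j+1] x)
      linarith
  obtain ⟨N, hN⟩ := hlim (ε/2) (by positivity)
  obtain ⟨δ, hδ, hpos⟩ := (((Filter.eventually_all_finite (Set.finite_lt_nat N)).2
        fun i _ => hrow i).and self_mem_nhdsWithin).exists
  refine ⟨δ, hpos, fun i j hij => ?_⟩
  by_cases hi : i < N
  · exact hδ i hi j hij
  by_cases hj : j < N
  · rw [dist_comm]
    exact hδ j hj i (by linarith)
  have h1 := hN (j+1) (by omega)
  have h3 := hN (i+1) (by omega)
  have h2 := dist_triangle_right (T^[i+1] x) (T^[j+1] x) z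
  linarith
end

section
/- Let (X,d) be a metric space and T : X → X a mapping satisfying d(Tx,Ty) ≤ (1/2)(d(x,Tx) + d(y,Ty)) for all x, y ∈ X. Fix x₀ ∈ X and set x_n = T^n x₀. If lim_{n→∞} d(x_n, x_{n+1}) = 0, then (x_n)_{n∈ℕ} is a Cauchy sequence. -/
/-- If T satisfies the nonstrict Kannan-type inequality and the successive distances of
a Picard sequence tend to 0, then the Picard sequence is Cauchy. -/
theorem kannan_cauchy {X : Type*} [MetricSpace X]
    (T : X → X)
    (h : ∀ x y : X, dist (T x) (T y) ≤ (dist x (T x) + dist y (T y)) / 2)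
    (x₀ : X)
    (hlim : Filter.Tendsto (fun n : ℕ => dist (T^[n] x₀) (T^[n+1] x₀))
      Filter.atTop (nhds 0)) :
    CauchySeq (fun n : ℕ => T^[n] x₀) := by
  rw [Metric.cauchySeq_iff]
  intro ε hε
  obtain ⟨N, hN⟩ := Filter.eventually_atTop.1 (hlim.eventually (gt_mem_nhds hε))
  refine ⟨N + 1, fun m hm n hn => ?_⟩
  obtain ⟨a, rfl⟩ : ∃ a, m = a + 1 := ⟨m - 1, by omega⟩
  obtain ⟨b, rfl⟩ : ∃ b, n = b + 1 := ⟨n - 1, by omega⟩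
  have ha := hN a (by omega)
  have hb := hN b (by omega)
  have hab := h (T^[a] x₀) (T^[b] x₀)
  simp only [Function.iterate_succ_apply'] at ha hb ⊢
  linarith
end

section
/- Let (X,d) be a complete metric space, T : X → X a mapping satisfying d(Tx,Ty) < (1/2)(d(x,Tx) + d(y,Ty)) whenever x ≠ y, and suppose u ∈ X is the limit of a Picard sequence x_n = T^n x₀ with lim_{n→∞} d(x_n, Tx_n) = 0. Then Tu = u. -/
/-- Under the strict Kannan-type inequality, the limit of a Picard sequence whose
displacement tends to 0 is a fixed point. -/
theorem kannan_limit_is_fixed {X : Type*} [MetricSpace X] [CompleteSpace X]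
    (T : X → X)
    (h : ∀ x y : X, x ≠ y → dist (T x) (T y) < (dist x (T x) + dist y (T y)) / 2)
    (x₀ : X) (u : X)
    (hconv : Filter.Tendsto (fun n : ℕ => T^[n] x₀) Filter.atTop (nhds u))
    (hdisp : Filter.Tendsto (fun n : ℕ => dist (T^[n] x₀) (T (T^[n] x₀)))
      Filter.atTop (nhds 0)) :
    T u = u := by
  have hle : ∀ n : ℕ, dist (T (T^[n] x₀)) (T u)
      ≤ (dist (T^[n] x₀) (T (T^[n] x₀)) + dist u (T u)) / 2 := by
    intro n
    by_cases hx : T^[n] x₀ = u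
    · rw [hx, dist_self]
      positivity
    · exact (h _ _ hx).le
  have h1 : Filter.Tendsto (fun n : ℕ => T (T^[n] x₀)) Filter.atTop (nhds u) := by
    have h2 := hconv.comp (Filter.tendsto_add_atTop_nat 1)
    refine h2.congr fun n => ?_
    exact Function.iterate_succ_apply' T n x₀
  have h3 := le_of_tendsto_of_tendsto' (h1.dist (tendsto_const_nhds (x := T u)))
    ((hdisp.add (tendsto_const_nhds (x := dist u (T u)))).div_const 2) hle
  have h4 : dist u (T u) = 0 := by
    have := dist_nonneg (x := u) (y := T u)
    linarith
  exact (dist_eq_zero.mp h4).symm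
end

section
/- Let (X,d) be a complete metric space and T : X → X a mapping such that (i) for every ε > 0 there exists δ > 0 such that for all x, y ∈ X, (1/2)(d(x,Ty) + d(y,Tx)) < ε + δ implies d(Tx,Ty) ≤ ε, and (ii) for all x, y ∈ X, x ≠ y implies d(Tx,Ty) < (1/2)(d(x,Ty) + d(y,Tx)). Then T has a unique fixed point. -/
/-- Chatterjea-type CJM fixed point theorem (Theorem 4.1). -/
theorem chatterjea_cjm_fixed_point {X : Type*} [MetricSpace X] [CompleteSpace X] [Nonempty X]
    (T : X → X)
    (h1 : ∀ ε > (0 : ℝ), ∃ δ > (0 : ℝ), ∀ x y : X,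
      (dist x (T y) + dist y (T x)) / 2 < ε + δ → dist (T x) (T y) ≤ ε)
    (h2 : ∀ x y : X, x ≠ y → dist (T x) (T y) < (dist x (T y) + dist y (T x)) / 2) :
    ∃! z : X, T z = z := by
  obtain ⟨x0⟩ := ‹Nonempty X›
  have hex : ∃ z : X, T z = z := by
    by_contra hno
    push Not at hno
    obtain ⟨u, hu⟩ : ∃ u : ℕ → X, ∀ n, u (n + 1) = T (u n) :=
      ⟨fun n => T^[n] x0, fun n => Function.iterate_succ_apply' T n x0⟩
    obtain ⟨a, ha⟩ : ∃ a : ℕ → ℝ, ∀ n, a n = dist (u n) (u (n + 1)) := ⟨_, fun n => rfl⟩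
    have ha0 : ∀ n, 0 ≤ a n := fun n => by rw [ha]; exact dist_nonneg
    have hstep : ∀ n, a (n + 1) < a n := by
      intro n
      have h := h2 (u n) (u (n + 1)) (by rw [hu]; exact (hno _).symm)
      rw [← hu, ← hu, dist_self] at h
      have h3 := dist_triangle (u n) (u (n + 1)) (u (n + 1 + 1))
      rw [← ha, ← ha] at h3
      rw [← ha] at h
      linarith
    have hanti : Antitone a := antitone_nat_of_succ_le fun n => (hstep n).le
    have hbdd : BddBelow (Set.range a) := ⟨0, by rintro _ ⟨n, rfl⟩; exact ha0 n⟩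
    have hlim := tendsto_atTop_ciInf hanti hbdd
    obtain ⟨L, hL⟩ : ∃ L, L = ⨅ n, a n := ⟨_, rfl⟩
    have hLle : ∀ n, L ≤ a n := fun n => hL ▸ ciInf_le hbdd n
    rw [← hL] at hlim
    have hL0 : L = 0 := by
      by_contra hne
      have hpos : 0 < L :=
        lt_of_le_of_ne (ge_of_tendsto' hlim ha0) (Ne.symm hne)
      obtain ⟨δ, hδ, h⟩ := h1 L hpos
      obtain ⟨n, hn⟩ := (hlim.eventually (gt_mem_nhds (show L < L + δ by linarith))).exists
      have h4 := h (u n) (u (n + 1))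
      rw [← hu, ← hu, dist_self, ← ha] at h4
      have h3 := dist_triangle (u n) (u (n + 1)) (u (n + 1 + 1))
      rw [← ha, ← ha] at h3
      have h5 := h4 (by linarith [hstep n])
      linarith [hstep (n + 1), hLle (n + 1 + 1)]
    rw [hL0] at hlim
    have hc : CauchySeq u := by
      rw [Metric.cauchySeq_iff']
      intro ε' hε'
      obtain ⟨δ, hδ, h⟩ := h1 (ε' / 2) (by linarith)
      obtain ⟨N, hN⟩ := (hlim.eventually (gt_mem_nhds hδ)).exists
      have key : ∀ k, dist (u (N + 1)) (u (N + 1 + k)) ≤ ε' / 2 := by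
        intro k
        induction k with
        | zero => simp; linarith
        | succ k ih =>
          have h4 := h (u N) (u (N + 1 + k))
          rw [← hu, ← hu] at h4
          apply h4
          have t1 := dist_triangle (u N) (u (N + 1)) (u (N + 1 + k + 1))
          have t2 := dist_triangle (u (N + 1)) (u (N + 1 + k)) (u (N + 1 + k + 1))
          rw [← ha] at t1 t2
          have t3 := hanti (show N ≤ N + 1 + k by omega)
          rw [dist_comm (u (N + 1 + k)) (u (N + 1))]
          linarith
      refine ⟨N + 1, fun n hn => ?_⟩
      obtain ⟨k, rfl⟩ := Nat.exists_eq_add_of_le hn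
      rw [dist_comm]
      linarith [key k]
    obtain ⟨z, hz⟩ := cauchySeq_tendsto_of_complete hc
    have hz1 := hz.comp (Filter.tendsto_add_atTop_nat 1)
    have hle : ∀ n, dist (u (n + 1)) (T z) ≤ (dist (u n) (T z) + dist z (u (n + 1))) / 2 := by
      intro n
      by_cases hq : u n = z
      · rw [hu, hq, dist_self]; positivity
      · have := (h2 (u n) z hq).le
        rwa [← hu] at this
    have hfin := le_of_tendsto_of_tendsto' (hz1.dist (tendsto_const_nhds (x := T z)))
      (((hz.dist (tendsto_const_nhds (x := T z))).add
        ((tendsto_const_nhds (x := z)).dist hz1)).div_const 2) hle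
    rw [dist_self] at hfin
    have hp := dist_pos.2 (hno z).symm
    linarith
  obtain ⟨z, hz⟩ := hex
  refine ⟨z, hz, fun y hy => ?_⟩
  by_contra hne
  have h := h2 y z hne
  have hy' : T y = y := hy
  rw [hy', hz, dist_comm z y] at h
  linarith
end

section
/- Let (X,d) be a complete metric space and T : X → X a mapping satisfying condition (CM2). If for every x ∈ X and every ε > 0 there exists δ > 0 such that for all i, j ∈ ℕ ∪ {0}, (1/2)(d(T^i x, T^{j+1} x) + d(T^j x, T^{i+1} x)) < ε + δ implies d(T^{i+1} x, T^{j+1} x) ≤ ε, then T has a unique fixed point z ∈ X and the Picard sequence (T^n x) converges to z for every x ∈ X. -/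
/-- Theorem 4.2, (i) ⇒ (ii): the weakest Chatterjea-type condition on Picard sequences
implies existence of a unique fixed point and convergence of all Picard sequences. -/
theorem chatterjea_weakest_forward {X : Type*} [MetricSpace X] [CompleteSpace X] [Nonempty X]
    (T : X → X)
    (hCM2 : ∀ x y : X, x ≠ y → dist (T x) (T y) < (dist x (T y) + dist y (T x)) / 2)
    (h : ∀ x : X, ∀ ε > (0 : ℝ), ∃ δ > (0 : ℝ), ∀ i j : ℕ,
      (dist (T^[i] x) (T^[j+1] x) + dist (T^[j] x) (T^[i+1] x)) / 2 < ε + δ →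
        dist (T^[i+1] x) (T^[j+1] x) ≤ ε) :
    ∃ z : X, T z = z ∧ (∀ w : X, T w = w → w = z) ∧
      ∀ x : X, Filter.Tendsto (fun n => T^[n] x) Filter.atTop (nhds z) := by
  have hle : ∀ x y : X, dist (T x) (T y) ≤ (dist x (T y) + dist y (T x)) / 2 := by
    intro x y
    by_cases hxy : x = y
    · subst hxy
      rw [dist_self]
      positivity
    · exact (hCM2 x y hxy).le
  have huniq : ∀ z w : X, T z = z → T w = w → w = z := by
    intro z w hz hw
    by_contra hne
    have h1 := hCM2 w z hne
    rw [hz, hw, dist_comm z w] at h1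
    linarith
  have hconv : ∀ x : X, ∃ z : X, T z = z ∧
      Filter.Tendsto (fun n => T^[n] x) Filter.atTop (nhds z) := by
    intro x
    obtain ⟨u, hu⟩ : ∃ u : ℕ → X, u = fun n => T^[n] x := ⟨_, rfl⟩
    have hs : ∀ n, u (n + 1) = T (u n) := by
      intro n
      simp only [hu, Function.iterate_succ_apply']
    have hx : ∀ ε > (0 : ℝ), ∃ δ > (0 : ℝ), ∀ i j : ℕ,
        (dist (u i) (u (j+1)) + dist (u j) (u (i+1))) / 2 < ε + δ →
        dist (u (i+1)) (u (j+1)) ≤ ε := by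
      rw [hu]
      exact h x
    rw [← hu]
    clear hu h
    have hanti : Antitone (fun n => dist (u n) (u (n + 1))) := by
      apply antitone_nat_of_succ_le
      intro n
      have h1 := hle (u n) (u (n + 1))
      rw [← hs, ← hs, dist_self] at h1
      have h2 := dist_triangle (u n) (u (n + 1)) (u (n + 1 + 1))
      linarith
    have hsmall : ∀ η > (0 : ℝ), ∃ N, ∀ n ≥ N, dist (u n) (u (n + 1)) < η := by
      have hbdd : BddBelow (Set.range (fun n => dist (u n) (u (n + 1)))) :=
        ⟨0, by rintro _ ⟨n, rfl⟩; exact dist_nonneg⟩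
      have hlim := tendsto_atTop_ciInf hanti hbdd
      have hge := fun n => ciInf_le hbdd n
      have hr0 : 0 ≤ ⨅ n, dist (u n) (u (n + 1)) := le_ciInf fun n => dist_nonneg
      generalize (⨅ n, dist (u n) (u (n + 1))) = r at hlim hge hr0
      have hr : r = 0 := by
        by_contra hne
        have hpos : 0 < r := lt_of_le_of_ne hr0 (Ne.symm hne)
        obtain ⟨δ, hδ, H⟩ := hx r hpos
        obtain ⟨n, hn⟩ := (hlim.eventually (gt_mem_nhds (show r < r + δ by linarith))).exists
        have h1 := H n (n + 1)
        have h2 := dist_triangle (u n) (u (n + 1)) (u (n + 1 + 1))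
        have h3 : dist (u (n + 1)) (u (n + 1 + 1)) ≤ dist (u n) (u (n + 1)) :=
          hanti (Nat.le_succ n)
        rw [dist_self] at h1
        have h4 := h1 (by linarith)
        have h5 : r ≤ dist (u (n + 1)) (u (n + 1 + 1)) := hge (n + 1)
        have h6 : r ≤ dist (u (n + 1 + 1)) (u (n + 1 + 1 + 1)) := hge (n + 1 + 1)
        have h7 := hCM2 (u (n + 1)) (u (n + 1 + 1)) (dist_pos.1 (by linarith))
        rw [← hs, ← hs, dist_self] at h7
        have h8 := dist_triangle (u (n + 1)) (u (n + 1 + 1)) (u (n + 1 + 1 + 1))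
        linarith
      subst hr
      intro η hη
      exact Filter.eventually_atTop.1 (hlim.eventually (gt_mem_nhds hη))
    have hc : CauchySeq u := by
      rw [Metric.cauchySeq_iff']
      intro e he
      obtain ⟨δ, hδ, H⟩ := hx (e / 2) (by linarith)
      obtain ⟨N, hN⟩ := hsmall δ hδ
      have key : ∀ k, ∀ m ≥ N, dist (u (m + 1)) (u (m + k + 1)) ≤ e / 2 := by
        intro k
        induction k with
        | zero => intro m _; simp; linarith
        | succ k ih =>
          intro m hm
          apply H
          have h1 := ih m hm
          have h2 := hN m hm
          have h3 := hN (m + k + 1) (by omega)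
          have h4 := dist_triangle (u m) (u (m + 1)) (u (m + k + 1 + 1))
          have h5 := dist_triangle (u (m + 1)) (u (m + k + 1)) (u (m + k + 1 + 1))
          rw [← add_assoc, dist_comm (u (m + k + 1)) (u (m + 1))]
          linarith
      refine ⟨N + 1, fun n hn => ?_⟩
      have h1 := key (n - (N + 1)) N le_rfl
      rw [show N + (n - (N + 1)) + 1 = n by omega, dist_comm] at h1
      linarith
    obtain ⟨z, hz⟩ := cauchySeq_tendsto_of_complete hc
    refine ⟨z, ?_, hz⟩
    have hz1 := hz.comp (Filter.tendsto_add_atTop_nat 1)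
    have hL : Filter.Tendsto (fun n => dist (T z) (u (n + 1))) Filter.atTop
        (nhds (dist (T z) z)) := tendsto_const_nhds.dist hz1
    have hR : Filter.Tendsto (fun n => (dist z (u (n + 1)) + dist (u n) (T z)) / 2) Filter.atTop
        (nhds ((dist z z + dist z (T z)) / 2)) :=
      ((tendsto_const_nhds.dist hz1).add (hz.dist tendsto_const_nhds)).div_const 2
    have hfin := le_of_tendsto_of_tendsto' hL hR (fun n => by
      have h1 := hle z (u n)
      rwa [← hs] at h1)
    rw [dist_self, dist_comm z] at hfin
    apply dist_le_zero.1
    linarith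
  obtain ⟨x0⟩ := ‹Nonempty X›
  obtain ⟨z, hz, _⟩ := hconv x0
  refine ⟨z, hz, fun w hw => huniq z w hz hw, fun x => ?_⟩
  obtain ⟨w, hw, hlim⟩ := hconv x
  rw [← huniq z w hz hw]
  exact hlim
end

section
/- Let (X,d) be a complete metric space and T : X → X a mapping satisfying condition (CM2). If T has a unique fixed point z ∈ X and the Picard sequence (T^n x) converges to z for every x ∈ X, then for every x ∈ X and every ε > 0 there exists δ > 0 such that for all i, j ∈ ℕ ∪ {0}, (1/2)(d(T^i x, T^{j+1} x) + d(T^j x, T^{i+1} x)) < ε + δ implies d(T^{i+1} x, T^{j+1} x) ≤ ε. -/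
/-- Theorem 4.2, (ii) ⇒ (i): if a (CM2) mapping has a unique fixed point to which all
Picard sequences converge, then the weakest Chatterjea-type ε-δ condition holds. -/
theorem chatterjea_weakest_backward {X : Type*} [MetricSpace X] [CompleteSpace X] [Nonempty X]
    (T : X → X)
    (hCM2 : ∀ x y : X, x ≠ y → dist (T x) (T y) < (dist x (T y) + dist y (T x)) / 2)
    (z : X) (hz : T z = z) (huniq : ∀ w : X, T w = w → w = z)
    (hconv : ∀ x : X, Filter.Tendsto (fun n => T^[n] x) Filter.atTop (nhds z)) :
    ∀ x : X, ∀ ε > (0 : ℝ), ∃ δ > (0 : ℝ), ∀ i j : ℕ,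
      (dist (T^[i] x) (T^[j+1] x) + dist (T^[j] x) (T^[i+1] x)) / 2 < ε + δ →
        dist (T^[i+1] x) (T^[j+1] x) ≤ ε := by
  intro x ε hε
  have hx := hconv x
  have hx1 : Filter.Tendsto (fun n => T^[n+1] x) Filter.atTop (nhds z) :=
    hx.comp (Filter.tendsto_add_atTop_nat 1)
  have hsmall : ∀ c > (0 : ℝ), ∀ᶠ δ in nhdsWithin (0 : ℝ) (Set.Ioi 0), δ < c := fun c hc =>
    nhdsWithin_le_nhds (Iio_mem_nhds hc)
  -- a single pair of indices
  have hpair : ∀ i j : ℕ, ∀ᶠ δ in nhdsWithin (0 : ℝ) (Set.Ioi 0),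
      (dist (T^[i] x) (T^[j+1] x) + dist (T^[j] x) (T^[i+1] x)) / 2 < ε + δ →
        dist (T^[i+1] x) (T^[j+1] x) ≤ ε := by
    intro i j
    by_cases h : dist (T^[i+1] x) (T^[j+1] x) ≤ ε
    · exact Filter.Eventually.of_forall fun _ _ => h
    · push Not at h
      have hne : T^[i] x ≠ T^[j] x := by
        intro he
        rw [Function.iterate_succ_apply', Function.iterate_succ_apply', he, dist_self] at h
        linarith
      have h2 := hCM2 _ _ hne
      rw [← Function.iterate_succ_apply' T, ← Function.iterate_succ_apply' T] at h2
      filter_upwards [hsmall ((dist (T^[i] x) (T^[j+1] x) + dist (T^[j] x) (T^[i+1] x)) / 2 - ε)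
        (by linarith)] with δ hδ hM
      linarith
  -- a single row
  have hrow : ∀ i : ℕ, ∀ᶠ δ in nhdsWithin (0 : ℝ) (Set.Ioi 0), ∀ j : ℕ,
      (dist (T^[i] x) (T^[j+1] x) + dist (T^[j] x) (T^[i+1] x)) / 2 < ε + δ →
        dist (T^[i+1] x) (T^[j+1] x) ≤ ε := by
    intro i
    have htail : ∃ N : ℕ, ∀ᶠ δ in nhdsWithin (0 : ℝ) (Set.Ioi 0), ∀ j : ℕ, N ≤ j →
        (dist (T^[i] x) (T^[j+1] x) + dist (T^[j] x) (T^[i+1] x)) / 2 < ε + δ →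
          dist (T^[i+1] x) (T^[j+1] x) ≤ ε := by
      have hd : Filter.Tendsto (fun j => dist (T^[i+1] x) (T^[j+1] x)) Filter.atTop
          (nhds (dist (T^[i+1] x) z)) := tendsto_const_nhds.dist hx1
      have hM : Filter.Tendsto
          (fun j => (dist (T^[i] x) (T^[j+1] x) + dist (T^[j] x) (T^[i+1] x)) / 2) Filter.atTop
          (nhds ((dist (T^[i] x) z + dist z (T^[i+1] x)) / 2)) :=
        ((tendsto_const_nhds.dist hx1).add (hx.dist tendsto_const_nhds)).div_const 2
      by_cases h : dist (T^[i+1] x) z < ε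
      · obtain ⟨N, hN⟩ := Filter.eventually_atTop.1 (hd.eventually (Iio_mem_nhds h))
        exact ⟨N, Filter.Eventually.of_forall fun _ j hj _ => le_of_lt (hN j hj)⟩
      · push Not at h
        have hne : T^[i] x ≠ z := by
          intro he
          rw [Function.iterate_succ_apply', he, hz, dist_self] at h
          linarith
        have h2 := hCM2 _ _ hne
        rw [← Function.iterate_succ_apply' T, hz] at h2
        obtain ⟨c, hc1, hc2⟩ := exists_between (lt_of_le_of_lt h h2)
        obtain ⟨N, hN⟩ := Filter.eventually_atTop.1 (hM.eventually (Ioi_mem_nhds hc2))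
        refine ⟨N, ?_⟩
        filter_upwards [hsmall (c - ε) (by linarith)] with δ hδ j hj hlt
        have h3 : c < _ := hN j hj
        linarith
    obtain ⟨N, hN⟩ := htail
    have hfin := (Set.finite_lt_nat N).eventually_all.2 (fun j _ => hpair i j)
    filter_upwards [hN, hfin] with δ h1 h2 j
    rcases lt_or_ge j N with h | h
    · exact h2 j h
    · exact h1 j h
  obtain ⟨N, hN⟩ := Metric.cauchySeq_iff.1 hx1.cauchySeq ε hε
  have hfin := (Set.finite_lt_nat N).eventually_all.2 (fun i _ => hrow i)
  obtain ⟨δ, hδ, hpos⟩ := (hfin.and self_mem_nhdsWithin).exists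
  refine ⟨δ, hpos, fun i j hM => ?_⟩
  rcases lt_or_ge i N with hi | hi
  · exact hδ i hi j hM
  · rcases lt_or_ge j N with hj | hj
    · rw [dist_comm]
      exact hδ j hj i (by rwa [add_comm (dist (T^[j] x) _)])
    · exact le_of_lt (hN i hi j hj)
end

section
/- Let (X,d) be a metric space and T : X → X a mapping satisfying condition (CM2). Fix x₀ ∈ X and set x_n = T^n x₀. If x_n ≠ x_{n+1} for all n, then the sequence (d(x_n, x_{n+1}))_{n∈ℕ} is strictly decreasing. -/
/-- Under (CM2), if the Picard sequence never stabilizes, the successive distances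
form a strictly decreasing sequence. -/
theorem chatterjea_cm2_strict_anti {X : Type*} [MetricSpace X]
    (T : X → X)
    (hCM2 : ∀ x y : X, x ≠ y → dist (T x) (T y) < (dist x (T y) + dist y (T x)) / 2)
    (x₀ : X) (hne : ∀ n : ℕ, T^[n] x₀ ≠ T^[n+1] x₀) :
    StrictAnti (fun n : ℕ => dist (T^[n] x₀) (T^[n+1] x₀)) := by
  refine strictAnti_nat_of_succ_lt fun n => ?_
  have h := hCM2 _ _ (hne n)
  have ht := dist_triangle (T^[n] x₀) (T^[n+1] x₀) (T^[n+1+1] x₀)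
  simp only [← Function.iterate_succ_apply' T, Nat.succ_eq_add_one, dist_self] at h
  show dist (T^[n+1] x₀) (T^[n+1+1] x₀) < dist (T^[n] x₀) (T^[n+1] x₀)
  linarith
end

section
/- Let (X,d) be a metric space, T : X → X a mapping, x₀ ∈ X, and x_n = T^n x₀. Suppose lim_{n→∞} d(x_n, x_{n+1}) = 0 and that for every ε > 0 there exists δ > 0 such that for all i, j ∈ ℕ ∪ {0}, (1/2)(d(x_i, x_{j+1}) + d(x_j, x_{i+1})) < ε + δ implies d(x_{i+1}, x_{j+1}) ≤ ε. Then (x_n)_{n∈ℕ} is a Cauchy sequence. -/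
/-- If the displacements of a Picard sequence tend to 0 and the weakest Chatterjea-type
ε-δ condition holds along the sequence, then the Picard sequence is Cauchy. -/
theorem chatterjea_cauchy {X : Type*} [MetricSpace X]
    (T : X → X) (x₀ : X)
    (hlim : Filter.Tendsto (fun n : ℕ => dist (T^[n] x₀) (T^[n+1] x₀))
      Filter.atTop (nhds 0))
    (h : ∀ ε > (0 : ℝ), ∃ δ > (0 : ℝ), ∀ i j : ℕ,
      (dist (T^[i] x₀) (T^[j+1] x₀) + dist (T^[j] x₀) (T^[i+1] x₀)) / 2 < ε + δ →
        dist (T^[i+1] x₀) (T^[j+1] x₀) ≤ ε) :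
    CauchySeq (fun n : ℕ => T^[n] x₀) := by
  rw [Metric.cauchySeq_iff']
  intro e he
  obtain ⟨δ, hδ, H⟩ := h (e / 2) (by linarith)
  obtain ⟨N, hN⟩ := Filter.eventually_atTop.1 (hlim.eventually (gt_mem_nhds hδ))
  have key : ∀ k : ℕ, dist (T^[N+1] x₀) (T^[N+k+1] x₀) ≤ e / 2 := by
    intro k
    induction k with
    | zero => simp; linarith
    | succ k ih =>
      apply H N (N + (k + 1))
      have h1 := hN N le_rfl
      have h2 := hN (N + k + 1) (by omega)
      have h3 := dist_triangle4 (T^[N] x₀) (T^[N+1] x₀) (T^[N+k+1] x₀) (T^[N+k+1+1] x₀)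
      have h4 := dist_comm (T^[N+k+1] x₀) (T^[N+1] x₀)
      rw [← add_assoc N k 1]
      linarith
  refine ⟨N + 1, fun n hn => ?_⟩
  obtain ⟨k, rfl⟩ := Nat.exists_eq_add_of_le hn
  have h5 := key k
  rw [dist_comm, show N + 1 + k = N + k + 1 by omega]
  linarith
end

section
/- Let (a_n)_{n∈ℕ} be a strictly decreasing sequence of nonnegative reals with limit α ≥ 0, and let k ≥ 0 be a fixed integer. Then α = 0 if and only if for every ε > 0 there exists δ > 0 such that for all n ∈ ℕ, a_n < ε + δ implies a_{n+k} ≤ ε. -/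
/-- Lemma 5.1, (i) ⇔ (ii): for a strictly decreasing nonnegative sequence with limit α,
α = 0 iff the ε-δ condition with shift k holds. -/
theorem seq_zero_iff_shift_condition (a : ℕ → ℝ) (α : ℝ) (k : ℕ)
    (ha : StrictAnti a) (hnonneg : ∀ n, 0 ≤ a n)
    (hlim : Filter.Tendsto a Filter.atTop (nhds α)) :
    α = 0 ↔ ∀ ε > (0 : ℝ), ∃ δ > (0 : ℝ), ∀ n : ℕ, a n < ε + δ → a (n + k) ≤ ε := by
  have hge : ∀ n, α ≤ a n := fun n => ha.antitone.le_of_tendsto hlim n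
  constructor
  · intro h0 ε hε
    subst h0
    have hex : ∃ n, a n ≤ ε := by
      obtain ⟨n, hn⟩ := (hlim.eventually (gt_mem_nhds hε)).exists
      exact ⟨n, le_of_lt hn⟩
    classical
    have hN := Nat.find_spec hex
    have hmin := fun m => Nat.find_min (m := m) hex
    generalize Nat.find hex = N at hN hmin
    cases N with
    | zero =>
      exact ⟨1, one_pos, fun n _ => le_trans (ha.antitone (Nat.zero_le _)) hN⟩
    | succ M =>
      have hM : ε < a M := not_le.mp (hmin M (Nat.lt_succ_self M))
      refine ⟨a M - ε, sub_pos.mpr hM, fun n hn => ?_⟩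
      have h1 : a n < a M := by linarith
      have h2 : M < n := ha.lt_iff_gt.mp h1
      exact le_trans (ha.antitone (by omega)) hN
  · intro h
    have h0 : 0 ≤ α := ge_of_tendsto' hlim hnonneg
    by_contra hne
    have hpos : 0 < α := lt_of_le_of_ne h0 (Ne.symm hne)
    obtain ⟨δ, hδ, H⟩ := h α hpos
    obtain ⟨n, hn⟩ := (hlim.eventually (gt_mem_nhds (show α < α + δ by linarith))).exists
    have h1 := H n hn
    have h2 := ha (Nat.lt_succ_self (n + k))
    have h3 := hge (n + k).succ
    linarith
end

section
/- Let (a_n)_{n∈ℕ} be a strictly decreasing sequence of nonnegative reals with limit α ≥ 0, and let k ≥ 1 be a fixed integer. Then α = 0 if and only if for every ε > 0 there exists δ > 0 such that for all n ∈ ℕ, (1/2)(a_n + a_{n+1}) < ε + δ implies a_{n+k} ≤ ε. -/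
/-- Lemma 5.1, (i) ⇔ (iii): for a strictly decreasing nonnegative sequence with limit α
and k ≥ 1, α = 0 iff the averaged ε-δ condition with shift k holds. -/
theorem seq_zero_iff_avg_shift_condition (a : ℕ → ℝ) (α : ℝ) (k : ℕ) (hk : 1 ≤ k)
    (ha : StrictAnti a) (hnonneg : ∀ n, 0 ≤ a n)
    (hlim : Filter.Tendsto a Filter.atTop (nhds α)) :
    α = 0 ↔ ∀ ε > (0 : ℝ), ∃ δ > (0 : ℝ), ∀ n : ℕ,
      (a n + a (n + 1)) / 2 < ε + δ → a (n + k) ≤ ε := by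
  constructor
  · rintro rfl ε hε
    have hex : ∃ N, a (N + k) ≤ ε := by
      obtain ⟨N, hN⟩ := (hlim.eventually (gt_mem_nhds hε)).exists
      exact ⟨N, (ha.antitone (Nat.le_add_right N k)).trans hN.le⟩
    classical
    rcases hm : Nat.find hex with _ | m
    · refine ⟨1, one_pos, fun n _ => ?_⟩
      have h := Nat.find_spec hex
      rw [hm] at h
      exact (ha.antitone (by omega)).trans h
    · have h := Nat.find_spec hex
      rw [hm] at h
      have h1 : ¬ a (m + k) ≤ ε := Nat.find_min hex (by omega)
      have h2 : a (m + k) ≤ a (m + 1) := ha.antitone (by omega)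
      have h3 : a (m + 1) < a m := ha (by omega)
      refine ⟨(a m + a (m + 1)) / 2 - ε, by linarith, fun n hn => ?_⟩
      have hmn : m < n := by
        by_contra hc
        have h4 : a m ≤ a n := ha.antitone (by omega)
        have h5 : a (m + 1) ≤ a (n + 1) := ha.antitone (by omega)
        linarith
      exact (ha.antitone (by omega)).trans h
  · intro H
    have h0 : 0 ≤ α := ge_of_tendsto' hlim hnonneg
    by_contra hne
    have hpos : 0 < α := lt_of_le_of_ne h0 (Ne.symm hne)
    obtain ⟨δ, hδ, h⟩ := H α hpos
    obtain ⟨n, hn⟩ := (hlim.eventually (gt_mem_nhds (show α < α + δ by linarith))).exists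
    have h1 : a (n + 1) < a n := ha (by omega)
    have h2 := h n (by linarith)
    have h3 : a (n + k + 1) < a (n + k) := ha (by omega)
    have h4 : α ≤ a (n + k + 1) := ha.antitone.le_of_tendsto hlim _
    linarith
end

section
/- Let (a_n)_{n∈ℕ} be a strictly decreasing sequence of nonnegative reals with limit α ≥ 0. If for every ε ∈ (0,∞) with ε ∉ {a_k : k ∈ ℕ} there exists δ > 0 such that for all m, n ∈ ℕ, a_m + a_n < ε + δ implies a_m + a_n ≤ ε, then α = 0. -/
/-- Lemma 5.1, (iv) ⇒ (i): for a strictly decreasing nonnegative sequence with limit α,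
the pairwise-sum ε-δ condition for all ε avoiding the values of the sequence
forces α = 0. -/
theorem seq_pairwise_sum_condition_implies_zero (a : ℕ → ℝ) (α : ℝ)
    (ha : StrictAnti a) (hnonneg : ∀ n, 0 ≤ a n)
    (hlim : Filter.Tendsto a Filter.atTop (nhds α))
    (h : ∀ ε > (0 : ℝ), ε ∉ Set.range a →
      ∃ δ > (0 : ℝ), ∀ m n : ℕ, a m + a n < ε + δ → a m + a n ≤ ε) :
    α = 0 := by
  have hlt : ∀ n, α < a n := fun n =>
    lt_of_le_of_lt (ha.antitone.le_of_tendsto hlim (n + 1)) (ha (Nat.lt_succ_self n))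
  have h0 : 0 ≤ α := ge_of_tendsto' hlim hnonneg
  by_contra hne
  have hpos : 0 < α := lt_of_le_of_ne h0 (Ne.symm hne)
  have hnot : a 0 + α ∉ Set.range a := by
    rintro ⟨k, hk⟩
    have := ha.antitone (Nat.zero_le k)
    linarith
  obtain ⟨δ, hδ, H⟩ := h (a 0 + α) (by linarith [hnonneg 0]) hnot
  obtain ⟨n, hn⟩ := (hlim.eventually (gt_mem_nhds (show α < α + δ by linarith))).exists
  have := H 0 n (by linarith)
  linarith [hlt n]
end

section
/- Let (X,d) be a complete metric space and T : X → X a mapping satisfying condition (CM). Then the following are equivalent: (i) lim_{n→∞} d(T^n x, T^{n+1} x) = 0 for every x ∈ X; (ii) T has a unique fixed point z ∈ X and the Picard sequence (T^n x) converges to z for every x ∈ X. -/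
/-- Theorem 5.2: under (CM) on a complete metric space, all Picard displacement
sequences tend to 0 iff T has a unique fixed point to which all Picard sequences
converge. -/
theorem kannan_displacement_zero_iff_fixed_point {X : Type*} [MetricSpace X]
    [CompleteSpace X] [Nonempty X]
    (T : X → X)
    (hCM : ∀ x y : X, x ≠ y → dist (T x) (T y) < (dist x (T x) + dist y (T y)) / 2) :
    (∀ x : X, Filter.Tendsto (fun n : ℕ => dist (T^[n] x) (T^[n+1] x))
        Filter.atTop (nhds 0)) ↔
      ∃ z : X, T z = z ∧ (∀ w : X, T w = w → w = z) ∧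
        ∀ x : X, Filter.Tendsto (fun n => T^[n] x) Filter.atTop (nhds z) := by
  have hw : ∀ x y : X, dist (T x) (T y) ≤ (dist x (T x) + dist y (T y)) / 2 := by
    intro x y
    by_cases h : x = y
    · subst h
      rw [dist_self]
      positivity
    · exact (hCM x y h).le
  constructor
  · intro hi
    obtain ⟨x0⟩ := ‹Nonempty X›
    have hcau : CauchySeq (fun n => T^[n] x0) := by
      rw [Metric.cauchySeq_iff]
      intro ε hε
      obtain ⟨N, hN⟩ := Filter.eventually_atTop.1 ((hi x0).eventually (gt_mem_nhds hε))
      refine ⟨N + 1, fun m hm n hn => ?_⟩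
      obtain ⟨m, rfl⟩ : ∃ k, m = k + 1 := ⟨m - 1, by omega⟩
      obtain ⟨n, rfl⟩ : ∃ k, n = k + 1 := ⟨n - 1, by omega⟩
      have h1 := hN m (by omega)
      have h2 := hN n (by omega)
      have h3 := hw (T^[m] x0) (T^[n] x0)
      simp only [Function.iterate_succ_apply'] at h1 h2 ⊢
      linarith
    obtain ⟨z, hz⟩ := cauchySeq_tendsto_of_complete hcau
    have hfix : T z = z := by
      have h1 : Filter.Tendsto (fun n => dist (T^[n+1] x0) (T z)) Filter.atTop
          (nhds (dist z (T z))) :=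
        ((Filter.tendsto_add_atTop_iff_nat 1).2 hz).dist tendsto_const_nhds
      have h2 : Filter.Tendsto
          (fun n => (dist (T^[n] x0) (T^[n+1] x0) + dist z (T z)) / 2) Filter.atTop
          (nhds ((0 + dist z (T z)) / 2)) :=
        ((hi x0).add tendsto_const_nhds).div_const 2
      have h3 := le_of_tendsto_of_tendsto' h1 h2 (fun n => by
        have := hw (T^[n] x0) z
        simpa only [Function.iterate_succ_apply'] using this)
      have h4 : dist z (T z) = 0 := le_antisymm (by linarith) dist_nonneg
      exact (dist_eq_zero.1 h4).symm
    refine ⟨z, hfix, fun w hwf => ?_, fun x => ?_⟩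
    · have h := hw w z
      rw [hwf, hfix, dist_self, dist_self] at h
      exact dist_le_zero.1 (by linarith)
    · rw [← Filter.tendsto_add_atTop_iff_nat 1, tendsto_iff_dist_tendsto_zero]
      refine squeeze_zero (fun _ => dist_nonneg) (fun n => ?_) (hi x)
      have h := hw (T^[n] x) z
      rw [hfix, dist_self] at h
      have h0 : 0 ≤ dist (T^[n] x) (T (T^[n] x)) := dist_nonneg
      simp only [Function.iterate_succ_apply']
      linarith
  · rintro ⟨z, -, -, hz⟩ x
    have h := (hz x).dist ((Filter.tendsto_add_atTop_iff_nat 1).2 (hz x))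
    rwa [dist_self] at h
end
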